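/- For every prime q, every positive integer a, and every real x ≥ e^e, the number of positive integers n ≤ x such that q^a divides λ(n) is O(x·(log log x)/q^a), where λ is the Carmichael function. -/

import Mathlib

/-- The Carmichael lambda function: the exponent of the multiplicative group `(ℤ/nℤ)ˣ`. -/
noncomputable def carmichael (n : ℕ) : ℕ := Monoid.exponent (ZMod n)ˣ

/-!
If `q ^ a ∣ λ(n)`, then `q ^ (a + 1) ∣ n` or `n` has a prime factor `p ≡ 1 (mod q ^ a)`, because
`λ(n)` is the lcm of the `λ(p ^ k)` over the prime powers `p ^ k` exactly dividing `n`, and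
`λ(p ^ k)` divides `p ^ (k - 1) * (p - 1)`. So the count is at most
`x / q ^ (a + 1) + x * ∑ 1 / p` over the primes `p ≤ x`, `p ≡ 1 (mod q ^ a)`. Selberg's `Λ²` sieve
bounds the number of such primes in `(m * 2 ^ j, m * 2 ^ (j + 1)]`, where `m = q ^ a`, by
`O(m * 2 ^ j / (φ(m) * (j + 1)))`. Each of these blocks thus contributes `O(1 / (φ(m) * (j + 1)))`
to `∑ 1 / p`, and a harmonic sum over `j ≤ log₂ x` gives `O(log (log x) / φ(m))`.
-/

open Finset
open scoped ArithmeticFunction.Moebius ArithmeticFunction.zeta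

lemma sum_comp_le_sum_of_injOn {ι κ : Type*} {s : Finset ι} {t : Finset κ} {g : ι → κ} {f : κ → ℝ}
    (hmaps : Set.MapsTo g s t) (hinj : Set.InjOn g s) (hf : ∀ k ∈ t, 0 ≤ f k) :
    ∑ i ∈ s, f (g i) ≤ ∑ k ∈ t, f k := by
  classical
  rw [← sum_image (f := f) hinj]
  exact sum_le_sum_of_subset_of_nonneg (image_subset_iff.2 hmaps) fun k hk _ => hf k hk

section SelbergSieve

lemma sum_moebius_of_dvd_of_dvd {f l : ℕ} (hl : Squarefree l) :
    ∑ d ∈ l.divisors with f ∣ d, μ d = if f = l then μ f else 0 := by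
  by_cases hfl : f ∣ l
  · obtain ⟨c, rfl⟩ := hfl
    have hf : f ≠ 0 := left_ne_zero_of_mul hl.ne_zero
    have himage : {d ∈ (f * c).divisors | f ∣ d} = c.divisors.image (f * ·) := by
      ext d
      simp only [mem_filter, mem_image, Nat.mem_divisors]
      constructor
      · rintro ⟨⟨h, hfc⟩, ⟨k, rfl⟩⟩
        exact ⟨k, ⟨(mul_dvd_mul_iff_left hf).1 h, right_ne_zero_of_mul hfc⟩, rfl⟩
      · rintro ⟨k, ⟨hk, -⟩, rfl⟩
        exact ⟨⟨mul_dvd_mul_left f hk, hl.ne_zero⟩, dvd_mul_right f k⟩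
    rw [himage, sum_image (mul_right_injective₀ hf).injOn]
    calc ∑ k ∈ c.divisors, μ (f * k)
        = μ f * ∑ k ∈ c.divisors, μ k := by
          rw [mul_sum]
          refine sum_congr rfl fun k hk => ?_
          exact ArithmeticFunction.isMultiplicative_moebius.map_mul_of_coprime
            (((Nat.squarefree_mul_iff.1 hl).1).coprime_dvd_right (Nat.dvd_of_mem_divisors hk))
      _ = if f = f * c then μ f else 0 := by
          rw [← ArithmeticFunction.coe_mul_zeta_apply, ArithmeticFunction.moebius_mul_coe_zeta,
            ArithmeticFunction.one_apply, mul_ite, mul_one, mul_zero]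
          simp only [left_eq_mul₀ hf]
  · rw [if_neg (by rintro rfl; exact hfl dvd_rfl)]
    refine sum_eq_zero fun d hd => absurd ?_ hfl
    exact (mem_filter.1 hd).2.trans (Nat.dvd_of_mem_divisors (mem_filter.1 hd).1)

variable {s : BoundingSieve} {D : Finset ℕ}

lemma nu_le_selbergTerms {d : ℕ} (hd : d ∣ s.prodPrimes) :
    s.nu d ≤ s.selbergTerms d := by
  rw [s.selbergTerms_apply]
  refine le_mul_of_one_le_right (s.nu_pos_of_dvd_prodPrimes hd).le ?_
  refine Finset.one_le_prod fun p hp => ?_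
  have hpP : p ∣ s.prodPrimes := (Nat.dvd_of_mem_primeFactors hp).trans hd
  have hp := Nat.prime_of_mem_primeFactors hp
  have hlt := s.nu_lt_one_of_prime p hp hpP
  have hpos := s.nu_pos_of_prime p hp hpP
  exact (one_le_inv₀ (by linarith)).2 (by linarith)

/-- The weights `λ_d` of Selberg's `Λ²` sieve for the sieve problem `s`, supported on a
divisor-closed set `D` of divisors of `s.prodPrimes` (classically, those below the square root of
the level). -/
noncomputable def selbergWeight (s : BoundingSieve) (D : Finset ℕ) (d : ℕ) : ℝ :=
  μ d / s.nu d * (∑ l ∈ D with d ∣ l, s.selbergTerms l) / ∑ l ∈ D, s.selbergTerms l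

lemma sum_selbergTerms_pos (hD : D ⊆ s.prodPrimes.divisors) (hne : D.Nonempty) :
    0 < ∑ l ∈ D, s.selbergTerms l :=
  sum_pos (fun _ hl => s.selbergTerms_pos (Nat.dvd_of_mem_divisors (hD hl))) hne

lemma selbergWeight_one (hD : D ⊆ s.prodPrimes.divisors) (hne : D.Nonempty) :
    selbergWeight s D 1 = 1 := by
  simp [selbergWeight, s.nu_mult.map_one, (sum_selbergTerms_pos hD hne).ne']

lemma selbergWeight_eq_zero (hdvd : ∀ l ∈ D, ∀ d, d ∣ l → d ∈ D) {d : ℕ} (hd : d ∉ D) :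
    selbergWeight s D d = 0 := by
  have hempty : {l ∈ D | d ∣ l} = ∅ := filter_eq_empty_iff.2 fun l hl hdl => hd (hdvd l hl d hdl)
  simp [selbergWeight, hempty]

/-- Since `g d / ν d = ∑ e ∣ d, g e`, the left side is a sum of `g` over the numbers
`e * (l / d)`, which are pairwise distinct divisors of elements of `D`. -/
lemma inv_nu_mul_sum_selbergTerms_le (hD : D ⊆ s.prodPrimes.divisors)
    (hdvd : ∀ l ∈ D, ∀ d, d ∣ l → d ∈ D) {d : ℕ} (hd : d ∈ D) :
    (s.nu d)⁻¹ * ∑ l ∈ D with d ∣ l, s.selbergTerms l ≤ ∑ l ∈ D, s.selbergTerms l := by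
  have hdP : d ∣ s.prodPrimes := Nat.dvd_of_mem_divisors (hD hd)
  have hd0 : d ≠ 0 := ne_zero_of_dvd_ne_zero s.prodPrimes_ne_zero hdP
  have hcoprime {k : ℕ} (hk : d * k ∈ D) : d.Coprime k :=
    (Nat.squarefree_mul_iff.1
      (s.squarefree_of_dvd_prodPrimes (Nat.dvd_of_mem_divisors (hD hk)))).1
  have hterm : ∀ l ∈ {l ∈ D | d ∣ l}, (s.nu d)⁻¹ * s.selbergTerms l =
      ∑ e ∈ d.divisors, s.selbergTerms (e * (l / d)) := by
    intro l hl
    obtain ⟨hlD, k, rfl⟩ := mem_filter.1 hl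
    have hdiv := s.sum_divisors_selbergTerms_eq_selbergTerms_mul_nu_inv hdP
    rw [← sum_filter, Nat.divisors_filter_dvd_of_dvd s.prodPrimes_ne_zero hdP] at hdiv
    rw [Nat.mul_div_cancel_left k (Nat.pos_of_ne_zero hd0),
      s.selbergTerms_isMultiplicative.map_mul_of_coprime (hcoprime hlD), ← mul_assoc,
      mul_comm _ (s.selbergTerms d), ← hdiv, sum_mul]
    exact sum_congr rfl fun e he => (s.selbergTerms_isMultiplicative.map_mul_of_coprime
      ((hcoprime hlD).coprime_dvd_left (Nat.dvd_of_mem_divisors he))).symm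
  rw [mul_sum, sum_congr rfl hterm, ← sum_product']
  refine sum_comp_le_sum_of_injOn (g := fun z : ℕ × ℕ => z.2 * (z.1 / d)) ?_ ?_
    fun l hl => (s.selbergTerms_pos (Nat.dvd_of_mem_divisors (hD hl))).le
  · rintro ⟨l, e⟩ hle
    obtain ⟨hl, he⟩ := mem_product.1 hle
    obtain ⟨hlD, k, rfl⟩ := mem_filter.1 hl
    refine hdvd _ hlD _ ?_
    simpa only [Nat.mul_div_cancel_left k (Nat.pos_of_ne_zero hd0)]
      using mul_dvd_mul_right (Nat.dvd_of_mem_divisors he) k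
  · have hgcd : ∀ e k : ℕ, e ∣ d → d * k ∈ D → d.gcd (e * k) = e := fun e k he hk => by
      rw [(hcoprime hk).symm.gcd_mul_right_cancel_right, Nat.gcd_eq_right he]
    rintro ⟨l, e⟩ hle ⟨l', e'⟩ hle' heq
    simp only [coe_product, Set.mem_prod, mem_coe, mem_filter, Nat.mem_divisors] at hle hle'
    obtain ⟨⟨hlD, k, rfl⟩, he, -⟩ := hle
    obtain ⟨⟨hlD', k', rfl⟩, he', -⟩ := hle'
    simp only [Nat.mul_div_cancel_left _ (Nat.pos_of_ne_zero hd0)] at heq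
    obtain rfl : e = e' := by rw [← hgcd e k he hlD, heq, hgcd e' k' he' hlD']
    rw [Nat.eq_of_mul_eq_mul_left (Nat.pos_of_dvd_of_pos he (Nat.pos_of_ne_zero hd0)) heq]

lemma abs_selbergWeight_le_one (hD : D ⊆ s.prodPrimes.divisors)
    (hdvd : ∀ l ∈ D, ∀ d, d ∣ l → d ∈ D) {d : ℕ} (hd : d ∈ D) :
    |selbergWeight s D d| ≤ 1 := by
  have hν : 0 < s.nu d := s.nu_pos_of_dvd_prodPrimes (Nat.dvd_of_mem_divisors (hD hd))
  have hμ : |(μ d : ℝ)| ≤ 1 := by exact_mod_cast ArithmeticFunction.abs_moebius_le_one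
  have hg (l : ℕ) (hl : l ∈ D) : 0 ≤ s.selbergTerms l :=
    (s.selbergTerms_pos (Nat.dvd_of_mem_divisors (hD hl))).le
  have hsum : 0 ≤ ∑ l ∈ D with d ∣ l, s.selbergTerms l :=
    sum_nonneg fun l hl => hg l (mem_filter.1 hl).1
  rw [selbergWeight, abs_div, abs_mul, abs_div, abs_of_pos hν, abs_of_nonneg hsum,
    abs_of_nonneg (sum_nonneg hg)]
  refine div_le_one_of_le₀ ?_ (sum_nonneg hg)
  calc |(μ d : ℝ)| / s.nu d * ∑ l ∈ D with d ∣ l, s.selbergTerms l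
      ≤ 1 / s.nu d * ∑ l ∈ D with d ∣ l, s.selbergTerms l := by gcongr
    _ ≤ ∑ l ∈ D, s.selbergTerms l := by
        rw [one_div]; exact inv_nu_mul_sum_selbergTerms_le hD hdvd hd

lemma sum_nu_mul_selbergWeight (hD : D ⊆ s.prodPrimes.divisors) (f : ℕ) :
    (∑ d ∈ s.prodPrimes.divisors, if f ∣ d then s.nu d * selbergWeight s D d else 0) =
      if f ∈ D then μ f * s.selbergTerms f / ∑ l ∈ D, s.selbergTerms l else 0 := by
  set S := ∑ l ∈ D, s.selbergTerms l
  calc (∑ d ∈ s.prodPrimes.divisors, if f ∣ d then s.nu d * selbergWeight s D d else 0)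
      = ∑ d ∈ s.prodPrimes.divisors with f ∣ d,
          ∑ l ∈ D with d ∣ l, μ d * (s.selbergTerms l / S) := by
        rw [← sum_filter]
        refine sum_congr rfl fun d hd => ?_
        have hν := s.nu_ne_zero (Nat.dvd_of_mem_divisors (mem_filter.1 hd).1)
        rw [selbergWeight, ← mul_sum, ← sum_div, mul_div_assoc, ← mul_assoc,
          mul_div_cancel₀ _ hν]
    _ = ∑ l ∈ D, s.selbergTerms l / S * ((∑ d ∈ l.divisors with f ∣ d, μ d : ℤ) : ℝ) := by
        simp_rw [Int.cast_sum, mul_sum, mul_comm]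
        refine sum_comm' fun d l => ?_
        simp only [mem_filter, Nat.mem_divisors]
        constructor
        · rintro ⟨⟨-, hfd⟩, hl, hdl⟩
          exact ⟨⟨⟨hdl, (Nat.pos_of_mem_divisors (hD hl)).ne'⟩, hfd⟩, hl⟩
        · rintro ⟨⟨⟨hdl, -⟩, hfd⟩, hl⟩
          exact ⟨⟨⟨hdl.trans (Nat.dvd_of_mem_divisors (hD hl)), s.prodPrimes_ne_zero⟩, hfd⟩,
            hl, hdl⟩
    _ = ∑ l ∈ D, if f = l then μ f * s.selbergTerms f / S else 0 := by
        refine sum_congr rfl fun l hl => ?_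
        rw [sum_moebius_of_dvd_of_dvd (s.squarefree_of_mem_divisors_prodPrimes (hD hl))]
        split_ifs with hfl
        · subst hfl; ring
        · simp
    _ = _ := sum_ite_eq D f _

lemma mainSum_lambdaSquared_selbergWeight (hD : D ⊆ s.prodPrimes.divisors) (hne : D.Nonempty) :
    s.mainSum (BoundingSieve.lambdaSquared (selbergWeight s D)) =
      (∑ l ∈ D, s.selbergTerms l)⁻¹ := by
  have hS := (sum_selbergTerms_pos hD hne).ne'
  simp_rw [s.mainSum_lambdaSquared_eq_sum_mul_sum_sq, sum_nu_mul_selbergWeight hD]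
  set S := ∑ l ∈ D, s.selbergTerms l with hS_def
  calc ∑ l ∈ s.prodPrimes.divisors,
        (s.selbergTerms l)⁻¹ * (if l ∈ D then μ l * s.selbergTerms l / S else 0) ^ 2
      = ∑ l ∈ D, (s.selbergTerms l)⁻¹ * (μ l * s.selbergTerms l / S) ^ 2 := by
        simp only [ite_pow, mul_ite, ne_eq, OfNat.ofNat_ne_zero, not_false_eq_true, zero_pow,
          mul_zero]
        rw [← sum_filter, filter_mem_eq_inter, inter_eq_right.2 hD]
    _ = ∑ l ∈ D, s.selbergTerms l / S ^ 2 := by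
        refine sum_congr rfl fun l hl => ?_
        have hg := (s.selbergTerms_pos (Nat.dvd_of_mem_divisors (hD hl))).ne'
        have hμ : (μ l : ℝ) ^ 2 = 1 := by
          exact_mod_cast ArithmeticFunction.moebius_sq_eq_one_of_squarefree
            (s.squarefree_of_mem_divisors_prodPrimes (hD hl))
        rw [div_pow, mul_pow, hμ]
        field_simp
    _ = S⁻¹ := by
        rw [← sum_div, ← hS_def]
        field_simp

lemma errSum_lambdaSquared_le (w : ℕ → ℝ) :
    s.errSum (BoundingSieve.lambdaSquared w) ≤ ∑ d₁ ∈ s.prodPrimes.divisors,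
      ∑ d₂ ∈ s.prodPrimes.divisors, |w d₁| * |w d₂| * |s.rem (d₁.lcm d₂)| := by
  have hterm : ∀ d ∈ s.prodPrimes.divisors, |BoundingSieve.lambdaSquared w d| ≤
      ∑ d₁ ∈ s.prodPrimes.divisors, ∑ d₂ ∈ s.prodPrimes.divisors,
        if d = d₁.lcm d₂ then |w d₁| * |w d₂| else 0 := by
    intro d hd
    have hsub : d.divisors ⊆ s.prodPrimes.divisors :=
      Nat.divisors_subset_of_dvd s.prodPrimes_ne_zero (Nat.dvd_of_mem_divisors hd)
    have hnonneg (d₁ d₂ : ℕ) : 0 ≤ if d = d₁.lcm d₂ then |w d₁| * |w d₂| else 0 := by positivity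
    calc |BoundingSieve.lambdaSquared w d|
        ≤ ∑ d₁ ∈ d.divisors, ∑ d₂ ∈ d.divisors,
            if d = d₁.lcm d₂ then |w d₁| * |w d₂| else 0 := by
          refine (abs_sum_le_sum_abs _ _).trans (sum_le_sum fun d₁ _ => ?_)
          refine (abs_sum_le_sum_abs _ _).trans (sum_le_sum fun d₂ _ => ?_)
          rw [apply_ite abs, abs_mul, abs_zero]
      _ ≤ ∑ d₁ ∈ s.prodPrimes.divisors, ∑ d₂ ∈ d.divisors,
            if d = d₁.lcm d₂ then |w d₁| * |w d₂| else 0 :=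
          sum_le_sum_of_subset_of_nonneg hsub fun d₁ _ _ => sum_nonneg fun d₂ _ => hnonneg d₁ d₂
      _ ≤ _ := sum_le_sum fun d₁ _ =>
          sum_le_sum_of_subset_of_nonneg hsub fun d₂ _ _ => hnonneg d₁ d₂
  calc s.errSum (BoundingSieve.lambdaSquared w)
      ≤ ∑ d ∈ s.prodPrimes.divisors, ∑ d₁ ∈ s.prodPrimes.divisors, ∑ d₂ ∈ s.prodPrimes.divisors,
          if d = d₁.lcm d₂ then |w d₁| * |w d₂| * |s.rem d| else 0 := by
        refine sum_le_sum fun d hd => ?_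
        refine (mul_le_mul_of_nonneg_right (hterm d hd) (abs_nonneg _)).trans_eq ?_
        simp_rw [sum_mul, ite_mul, zero_mul]
    _ = _ := by
        rw [sum_comm]
        refine sum_congr rfl fun d₁ hd₁ => ?_
        rw [sum_comm]
        refine sum_congr rfl fun d₂ hd₂ => ?_
        rw [sum_ite_eq_of_mem']
        exact Nat.mem_divisors.2 ⟨Nat.lcm_dvd (Nat.dvd_of_mem_divisors hd₁)
          (Nat.dvd_of_mem_divisors hd₂), s.prodPrimes_ne_zero⟩

theorem siftedSum_le_div_sum_selbergTerms_add (hD : D ⊆ s.prodPrimes.divisors) (hne : D.Nonempty)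
    (hdvd : ∀ l ∈ D, ∀ d, d ∣ l → d ∈ D) :
    s.siftedSum ≤ s.totalMass / (∑ l ∈ D, s.selbergTerms l) +
      ∑ d₁ ∈ D, ∑ d₂ ∈ D, |s.rem (d₁.lcm d₂)| := by
  have hupper := s.siftedSum_le_mainSum_errSum_of_upperMoebius _
    (BoundingSieve.upperMoebius_lambdaSquared _ (selbergWeight_one hD hne))
  rw [mainSum_lambdaSquared_selbergWeight hD hne, ← div_eq_mul_inv] at hupper
  grw [hupper, errSum_lambdaSquared_le]
  gcongr
  have hvanish (d : ℕ) (hd : d ∉ D) : |selbergWeight s D d| = 0 := by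
    rw [selbergWeight_eq_zero hdvd hd, abs_zero]
  calc ∑ d₁ ∈ s.prodPrimes.divisors, ∑ d₂ ∈ s.prodPrimes.divisors,
        |selbergWeight s D d₁| * |selbergWeight s D d₂| * |s.rem (d₁.lcm d₂)|
      = ∑ d₁ ∈ D, ∑ d₂ ∈ D,
          |selbergWeight s D d₁| * |selbergWeight s D d₂| * |s.rem (d₁.lcm d₂)| := by
        rw [← sum_subset hD fun d₁ _ hd₁ => by simp only [hvanish d₁ hd₁, zero_mul, sum_const_zero]]
        refine sum_congr rfl fun d₁ _ => (sum_subset hD fun d₂ _ hd₂ => ?_).symm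
        rw [hvanish d₂ hd₂, mul_zero, zero_mul]
    _ ≤ ∑ d₁ ∈ D, ∑ d₂ ∈ D, |s.rem (d₁.lcm d₂)| := by
        refine sum_le_sum fun d₁ hd₁ => sum_le_sum fun d₂ hd₂ => ?_
        exact mul_le_of_le_one_left (abs_nonneg _) (mul_le_one₀
          (abs_selbergWeight_le_one hD hdvd hd₁) (abs_nonneg _)
          (abs_selbergWeight_le_one hD hdvd hd₂))

end SelbergSieve

section HarmonicSums

lemma prod_one_sub_inv_mul_sum_inv_le (s : Finset ℕ) (R : ℕ) :
    (∏ p ∈ s, (1 - (p : ℝ)⁻¹)) * ∑ n ∈ Icc 1 R, (n : ℝ)⁻¹ ≤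
      ∑ n ∈ Icc 1 R with ∀ p ∈ s, ¬ p ∣ n, (n : ℝ)⁻¹ := by
  induction s using Finset.induction_on with
  | empty => simp
  | insert p s hps ih =>
    set E := {n ∈ Icc 1 R | ∀ r ∈ s, ¬ r ∣ n}
    have hmultiples : ∑ n ∈ E with p ∣ n, (n : ℝ)⁻¹ ≤ (p : ℝ)⁻¹ * ∑ n ∈ E, (n : ℝ)⁻¹ := by
      calc ∑ n ∈ E with p ∣ n, (n : ℝ)⁻¹
          = (p : ℝ)⁻¹ * ∑ n ∈ E with p ∣ n, ((n / p : ℕ) : ℝ)⁻¹ := by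
            rw [mul_sum]
            refine sum_congr rfl fun n hn => ?_
            rw [← mul_inv, ← Nat.cast_mul, Nat.mul_div_cancel' (mem_filter.1 hn).2]
        _ ≤ (p : ℝ)⁻¹ * ∑ n ∈ E, (n : ℝ)⁻¹ := by
            gcongr
            refine sum_comp_le_sum_of_injOn (f := fun n : ℕ => (n : ℝ)⁻¹) ?_ ?_
              fun n _ => by positivity
            · intro n hn
              simp only [E, coe_filter, mem_filter, mem_Icc, Set.mem_ofPred_eq] at hn ⊢
              obtain ⟨⟨⟨hn1, hnR⟩, hns⟩, hpn⟩ := hn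
              exact ⟨⟨Nat.div_pos (Nat.le_of_dvd hn1 hpn) (Nat.pos_of_dvd_of_pos hpn hn1),
                (Nat.div_le_self n p).trans hnR⟩,
                fun r hr hrn => hns r hr (hrn.trans (Nat.div_dvd_of_dvd hpn))⟩
            · intro n hn n' hn' heq
              exact (Nat.div_left_inj (mem_filter.1 hn).2 (mem_filter.1 hn').2).1 heq
    have hsplit := sum_filter_add_sum_filter_not E (p ∣ ·) fun n => (n : ℝ)⁻¹
    rw [prod_insert hps]
    calc (1 - (p : ℝ)⁻¹) * (∏ r ∈ s, (1 - (r : ℝ)⁻¹)) * ∑ n ∈ Icc 1 R, (n : ℝ)⁻¹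
        ≤ (1 - (p : ℝ)⁻¹) * ∑ n ∈ E, (n : ℝ)⁻¹ := by
          rw [mul_assoc]
          exact mul_le_mul_of_nonneg_left ih (sub_nonneg.2 (Nat.cast_inv_le_one p))
      _ ≤ ∑ n ∈ E with ¬ p ∣ n, (n : ℝ)⁻¹ := by linarith
      _ = ∑ n ∈ Icc 1 R with ∀ r ∈ insert p s, ¬ r ∣ n, (n : ℝ)⁻¹ := by
          simp_rw [E, filter_filter, forall_mem_insert, and_comm]

lemma totient_div_mul_log_le {m : ℕ} (hm : m ≠ 0) (R : ℕ) :
    (m.totient : ℝ) / m * Real.log (R + 1) ≤ ∑ n ∈ Icc 1 R with n.Coprime m, (n : ℝ)⁻¹ := by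
  have htotient : (m.totient : ℝ) / m = ∏ p ∈ m.primeFactors, (1 - (p : ℝ)⁻¹) := by
    rw [div_eq_iff (by exact_mod_cast hm), mul_comm]
    simpa using congrArg (Rat.cast : ℚ → ℝ) (Nat.totient_eq_mul_prod_factors m)
  have hcoprime (n : ℕ) : n.Coprime m ↔ ∀ p ∈ m.primeFactors, ¬ p ∣ n := by
    simp only [Nat.Coprime, Nat.eq_one_iff_not_exists_prime_dvd, Nat.dvd_gcd_iff,
      Nat.mem_primeFactors_of_ne_zero hm]
    tauto
  have hlog : Real.log (R + 1) ≤ ∑ n ∈ Icc 1 R, (n : ℝ)⁻¹ := by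
    simpa [harmonic_eq_sum_Icc] using log_add_one_le_harmonic R
  simp_rw [htotient, hcoprime]
  grw [← prod_one_sub_inv_mul_sum_inv_le m.primeFactors R]
  exact mul_le_mul_of_nonneg_left hlog
    (prod_nonneg fun p _ => sub_nonneg.2 (Nat.cast_inv_le_one p))

lemma sum_inv_le_two_mul_sum_inv_squarefree {E : Finset ℕ} (hpos : ∀ n ∈ E, n ≠ 0)
    (hdvd : ∀ n ∈ E, ∀ d, d ∣ n → d ∈ E) :
    ∑ n ∈ E, (n : ℝ)⁻¹ ≤ 2 * ∑ n ∈ E with Squarefree n, (n : ℝ)⁻¹ := by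
  choose r b hrb hr using Nat.sq_mul_squarefree
  have hterm (n : ℕ) : (n : ℝ)⁻¹ = ((b n : ℝ) ^ 2)⁻¹ * (r n : ℝ)⁻¹ := by
    rw [← mul_inv]; exact_mod_cast congrArg (fun k : ℕ => (k : ℝ)⁻¹) (hrb n).symm
  calc ∑ n ∈ E, (n : ℝ)⁻¹
      = ∑ n ∈ E, ((b n : ℝ) ^ 2)⁻¹ * (r n : ℝ)⁻¹ := sum_congr rfl fun n _ => hterm n
    _ ≤ ∑ z ∈ E ×ˢ {n ∈ E | Squarefree n}, ((z.1 : ℝ) ^ 2)⁻¹ * (z.2 : ℝ)⁻¹ := by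
        refine sum_comp_le_sum_of_injOn (g := fun n => (b n, r n))
          (f := fun z : ℕ × ℕ => ((z.1 : ℝ) ^ 2)⁻¹ * (z.2 : ℝ)⁻¹) ?_ ?_ fun z _ => by positivity
        · intro n hn
          have hbn : b n ∣ n := (Dvd.intro_left _ (pow_two (b n)).symm).trans (Dvd.intro _ (hrb n))
          have hrn : r n ∣ n := Dvd.intro_left _ (hrb n)
          simpa using ⟨hdvd n hn _ hbn, hdvd n hn _ hrn, hr n⟩
        · intro n _ n' _ heq
          obtain ⟨hb, hr⟩ : b n = b n' ∧ r n = r n' := Prod.ext_iff.1 heq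
          rw [← hrb n, ← hrb n', hb, hr]
    _ = (∑ n ∈ E, ((n : ℝ) ^ 2)⁻¹) * ∑ n ∈ E with Squarefree n, (n : ℝ)⁻¹ := by
        rw [sum_mul_sum, sum_product]
    _ ≤ 2 * ∑ n ∈ E with Squarefree n, (n : ℝ)⁻¹ := by
        gcongr
        calc ∑ n ∈ E, ((n : ℝ) ^ 2)⁻¹
            ≤ ∑ n ∈ Ioo 0 (E.sup id + 1), ((n : ℝ) ^ 2)⁻¹ := by
              refine sum_le_sum_of_subset_of_nonneg (fun n hn => ?_) fun n _ _ => by positivity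
              exact mem_Ioo.2 ⟨Nat.pos_of_ne_zero (hpos n hn),
                Nat.lt_succ_of_le (le_sup (f := id) hn)⟩
          _ ≤ 2 := by simpa using sum_Ioo_inv_sq_le (α := ℝ) 0 (E.sup id + 1)

lemma totient_div_mul_log_le_sum_squarefree {m : ℕ} (hm : m ≠ 0) (R : ℕ) :
    (m.totient : ℝ) / m * Real.log (R + 1) ≤
      2 * ∑ n ∈ Icc 1 R with Squarefree n ∧ n.Coprime m, (n : ℝ)⁻¹ := by
  refine (totient_div_mul_log_le hm R).trans
    ((sum_inv_le_two_mul_sum_inv_squarefree ?_ ?_).trans_eq ?_)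
  · intro n hn
    exact Nat.one_le_iff_ne_zero.1 (mem_Icc.1 (mem_filter.1 hn).1).1
  · intro n hn d hdn
    simp only [mem_filter, mem_Icc] at hn ⊢
    exact ⟨⟨Nat.pos_of_dvd_of_pos hdn hn.1.1, (Nat.le_of_dvd hn.1.1 hdn).trans hn.1.2⟩,
      hn.2.coprime_dvd_left hdn⟩
  · simp_rw [filter_filter, and_comm]

end HarmonicSums

section ArithmeticProgression

lemma abs_card_Ioc_filter_modEq_sub_le_one (u v c : ℕ) {r : ℕ} (hr : 0 < r) :
    |(#{n ∈ Ioc u (u + v) | n ≡ c [MOD r]} : ℝ) - v / r| ≤ 1 := by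
  have hcard := Nat.Ioc_filter_modEq_card u (u + v) hr c
  have hquot : (((u + v : ℕ) : ℚ) - c) / r = ((u : ℚ) - c) / r + v / r := by push_cast; ring
  have hmono : ⌊((u : ℚ) - c) / r⌋ ≤ ⌊(((u + v : ℕ) : ℚ) - c) / r⌋ :=
    Int.floor_mono (hquot ▸ le_add_of_nonneg_right (by positivity))
  rw [max_eq_left (sub_nonneg.2 hmono)] at hcard
  have hcard' : (#{n ∈ Ioc u (u + v) | n ≡ c [MOD r]} : ℚ) =
      ⌊(((u + v : ℕ) : ℚ) - c) / r⌋ - ⌊((u : ℚ) - c) / r⌋ := by exact_mod_cast hcard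
  have hℚ : |(#{n ∈ Ioc u (u + v) | n ≡ c [MOD r]} : ℚ) - v / r| ≤ 1 := by
    rw [hcard', abs_le]
    have hu := Int.floor_le (((u : ℚ) - c) / r)
    have hu' := Int.lt_floor_add_one (((u : ℚ) - c) / r)
    have hw := Int.floor_le ((((u + v : ℕ) : ℚ) - c) / r)
    have hw' := Int.lt_floor_add_one ((((u + v : ℕ) : ℚ) - c) / r)
    constructor <;> linarith
  have hℝ := (Rat.cast_le (K := ℝ)).2 hℚ
  push_cast at hℝ
  exact hℝ

lemma abs_card_Ioc_filter_modEq_filter_dvd_sub_le_one (u v c : ℕ) {m d : ℕ} (hm : 0 < m)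
    (hd : 0 < d) (hdm : d.Coprime m) :
    |(#{n ∈ Ioc u (u + v) | n ≡ c [MOD m] ∧ d ∣ n} : ℝ) - v / (m * d : ℕ)| ≤ 1 := by
  obtain ⟨b, hbm, hbd⟩ := Nat.chineseRemainder hdm.symm c 0
  have hclass (n : ℕ) : n ≡ c [MOD m] ∧ d ∣ n ↔ n ≡ b [MOD m * d] := by
    rw [← Nat.modEq_and_modEq_iff_modEq_mul hdm.symm, ← Nat.modEq_zero_iff_dvd]
    exact and_congr ⟨fun h => h.trans hbm.symm, fun h => h.trans hbm⟩
      ⟨fun h => h.trans hbd.symm, fun h => h.trans hbd⟩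
  simp_rw [hclass]
  exact abs_card_Ioc_filter_modEq_sub_le_one u v b (Nat.mul_pos hm hd)

variable {m c u v R : ℕ}

/-- The sieve problem of removing, from the `n ∈ (u, u + v]` with `n ≡ c (mod m)`, the multiples
of the primes `p ≤ R` that do not divide `m`. -/
noncomputable def progressionSieve (m c u v R : ℕ) : BoundingSieve where
  support := {n ∈ Ioc u (u + v) | n ≡ c [MOD m]}
  prodPrimes := ∏ p ∈ Icc 1 R with p.Prime ∧ p.Coprime m, p
  prodPrimes_squarefree := by
    refine Finset.squarefree_prod_of_pairwise_isCoprime (fun p hp r hr hpr => ?_)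
      fun p hp => (mem_filter.1 hp).2.1.squarefree
    exact Nat.coprime_iff_isRelPrime.1
      ((Nat.coprime_primes (mem_filter.1 hp).2.1 (mem_filter.1 hr).2.1).2 hpr)
  weights _ := 1
  weights_nonneg _ := zero_le_one
  totalMass := v / m
  nu := (ζ : ArithmeticFunction ℝ).pdiv (ArithmeticFunction.id : ArithmeticFunction ℝ)
  nu_mult := ArithmeticFunction.isMultiplicative_zeta.natCast.pdiv
    ArithmeticFunction.isMultiplicative_id.natCast
  nu_pos_of_prime p hp _ := by simp [hp.pos, hp.ne_zero]
  nu_lt_one_of_prime p hp _ := by simp [hp.ne_zero, inv_lt_one_of_one_lt₀, hp.one_lt]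

/-- The squarefree numbers up to `R` that are coprime to `m`, on which the weights for
`progressionSieve m c u v R` are supported. -/
def sieveModuli (m R : ℕ) : Finset ℕ := {d ∈ Icc 1 R | Squarefree d ∧ d.Coprime m}

lemma progressionSieve_nu {d : ℕ} (hd : d ≠ 0) : (progressionSieve m c u v R).nu d = (d : ℝ)⁻¹ := by
  simp [progressionSieve, hd]

lemma sieveModuli_subset_divisors :
    sieveModuli m R ⊆ (progressionSieve m c u v R).prodPrimes.divisors := by
  intro d hd
  obtain ⟨hd, hsq, hdm⟩ := mem_filter.1 hd
  refine Nat.mem_divisors.2 ⟨?_, (progressionSieve m c u v R).prodPrimes_ne_zero⟩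
  rw [← Nat.prod_primeFactors_of_squarefree hsq]
  refine prod_dvd_prod_of_subset d.primeFactors {p ∈ Icc 1 R | p.Prime ∧ p.Coprime m} id
    fun p hp => ?_
  have hpd := Nat.dvd_of_mem_primeFactors hp
  have hp := Nat.prime_of_mem_primeFactors hp
  exact mem_filter.2 ⟨mem_Icc.2 ⟨hp.one_le, (Nat.le_of_dvd (mem_Icc.1 hd).1 hpd).trans
    (mem_Icc.1 hd).2⟩, hp, hdm.coprime_dvd_left hpd⟩

lemma mem_sieveModuli_of_dvd : ∀ l ∈ sieveModuli m R, ∀ d, d ∣ l → d ∈ sieveModuli m R := by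
  intro l hl d hdl
  simp only [sieveModuli, mem_filter, mem_Icc] at hl ⊢
  obtain ⟨⟨hl1, hlR⟩, hsq, hlm⟩ := hl
  exact ⟨⟨Nat.pos_of_dvd_of_pos hdl hl1, (Nat.le_of_dvd hl1 hdl).trans hlR⟩,
    hsq.squarefree_of_dvd hdl, hlm.coprime_dvd_left hdl⟩

lemma abs_rem_progressionSieve_le_one (hm : m ≠ 0) {d : ℕ} (hd : d ≠ 0) (hdm : d.Coprime m) :
    |(progressionSieve m c u v R).rem d| ≤ 1 := by
  have hmult : (progressionSieve m c u v R).multSum d =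
      #{n ∈ Ioc u (u + v) | n ≡ c [MOD m] ∧ d ∣ n} := by
    simp [BoundingSieve.multSum, progressionSieve, filter_filter]
  have hmass : (progressionSieve m c u v R).nu d * (progressionSieve m c u v R).totalMass =
      v / (m * d : ℕ) := by
    rw [progressionSieve_nu hd, progressionSieve]
    push_cast
    field_simp
  rw [BoundingSieve.rem, hmult, hmass]
  exact abs_card_Ioc_filter_modEq_filter_dvd_sub_le_one u v c (Nat.pos_of_ne_zero hm)
    (Nat.pos_of_ne_zero hd) hdm

lemma sum_abs_rem_progressionSieve_le (hm : m ≠ 0) :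
    ∑ d₁ ∈ sieveModuli m R, ∑ d₂ ∈ sieveModuli m R,
      |(progressionSieve m c u v R).rem (d₁.lcm d₂)| ≤ R ^ 2 := by
  have hcard : (#(sieveModuli m R) : ℝ) ≤ R := by
    exact_mod_cast (card_filter_le _ _).trans_eq (Nat.card_Icc 1 R)
  calc ∑ d₁ ∈ sieveModuli m R, ∑ d₂ ∈ sieveModuli m R,
        |(progressionSieve m c u v R).rem (d₁.lcm d₂)|
      ≤ ∑ _ ∈ sieveModuli m R, ∑ _ ∈ sieveModuli m R, (1 : ℝ) := by
        gcongr with d₁ hd₁ d₂ hd₂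
        simp only [sieveModuli, mem_filter, mem_Icc] at hd₁ hd₂
        refine abs_rem_progressionSieve_le_one hm (Nat.lcm_ne_zero (by omega) (by omega)) ?_
        exact (hd₁.2.2.mul_left hd₂.2.2).coprime_dvd_left (Nat.lcm_dvd_mul d₁ d₂)
    _ = (#(sieveModuli m R) : ℝ) ^ 2 := by simp [pow_two]
    _ ≤ (R : ℝ) ^ 2 := by gcongr

lemma totient_div_mul_log_le_sum_selbergTerms (hm : m ≠ 0) :
    (m.totient : ℝ) / m * Real.log (R + 1) ≤
      2 * ∑ d ∈ sieveModuli m R, (progressionSieve m c u v R).selbergTerms d := by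
  refine (totient_div_mul_log_le_sum_squarefree hm R).trans ?_
  refine mul_le_mul_of_nonneg_left (sum_le_sum fun d hd => ?_) zero_le_two
  have hdP := Nat.dvd_of_mem_divisors (sieveModuli_subset_divisors (c := c) (u := u) (v := v) hd)
  have hd0 : d ≠ 0 := (mem_filter.1 hd).2.1.ne_zero
  rw [← progressionSieve_nu hd0]
  exact nu_le_selbergTerms hdP

lemma card_primes_modEq_le_siftedSum (hRu : R ≤ u) :
    (#{p ∈ Ioc u (u + v) | p.Prime ∧ p ≡ c [MOD m]} : ℝ) ≤
      (progressionSieve m c u v R).siftedSum := by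
  have hsifted : (progressionSieve m c u v R).siftedSum = #{p ∈ Ioc u (u + v) |
      p ≡ c [MOD m] ∧ (progressionSieve m c u v R).prodPrimes.Coprime p} := by
    rw [← filter_filter, ← sum_boole]
    rfl
  rw [hsifted]
  refine Nat.cast_le.2 (card_le_card fun p hp => ?_)
  obtain ⟨hp, hprime, hpc⟩ := mem_filter.1 hp
  have hcoprime : (∏ r ∈ Icc 1 R with r.Prime ∧ r.Coprime m, r).Coprime p := by
    refine Nat.Coprime.prod_left fun r hr => ?_
    obtain ⟨hr, hr_prime, -⟩ := mem_filter.1 hr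
    refine (Nat.coprime_primes hr_prime hprime).2 (ne_of_lt ?_)
    exact (mem_Icc.1 hr).2.trans_lt (hRu.trans_lt (mem_Ioc.1 hp).1)
  exact mem_filter.2 ⟨hp, hpc, hcoprime⟩

theorem brun_titchmarsh (hm : m ≠ 0) (c v : ℕ) (hR : 1 ≤ R) (hRu : R ≤ u) :
    (#{p ∈ Ioc u (u + v) | p.Prime ∧ p ≡ c [MOD m]} : ℝ) ≤
      2 * v / (m.totient * Real.log (R + 1)) + R ^ 2 := by
  set s := progressionSieve m c u v R
  have : (0 : ℝ) < m := by exact_mod_cast Nat.pos_of_ne_zero hm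
  have : (0 : ℝ) < m.totient := by
    exact_mod_cast Nat.totient_pos.2 (Nat.pos_of_ne_zero hm)
  have hlog : 0 < Real.log (R + 1) := Real.log_pos (by norm_cast; omega)
  have hne : (sieveModuli m R).Nonempty := ⟨1, by simp [sieveModuli, hR]⟩
  have hmain : s.totalMass / (∑ d ∈ sieveModuli m R, s.selbergTerms d) ≤
      2 * v / (m.totient * Real.log (R + 1)) := by
    have hS : m.totient / m * Real.log (R + 1) / 2 ≤ ∑ d ∈ sieveModuli m R, s.selbergTerms d := by
      linarith [totient_div_mul_log_le_sum_selbergTerms (c := c) (u := u) (v := v) (R := R) hm]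
    calc s.totalMass / (∑ d ∈ sieveModuli m R, s.selbergTerms d)
        ≤ (v / m) / (m.totient / m * Real.log (R + 1) / 2) := by
          change (v / m : ℝ) / _ ≤ _
          gcongr
      _ = 2 * v / (m.totient * Real.log (R + 1)) := by field_simp
  calc (#{p ∈ Ioc u (u + v) | p.Prime ∧ p ≡ c [MOD m]} : ℝ)
      ≤ s.siftedSum := card_primes_modEq_le_siftedSum hRu
    _ ≤ s.totalMass / (∑ d ∈ sieveModuli m R, s.selbergTerms d) +
          ∑ d₁ ∈ sieveModuli m R, ∑ d₂ ∈ sieveModuli m R, |s.rem (d₁.lcm d₂)| :=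
        siftedSum_le_div_sum_selbergTerms_add sieveModuli_subset_divisors hne
          mem_sieveModuli_of_dvd
    _ ≤ 2 * v / (m.totient * Real.log (R + 1)) + R ^ 2 :=
        add_le_add hmain (sum_abs_rem_progressionSieve_le hm)

end ArithmeticProgression

section PrimeReciprocals

/-- The bound for the sifting primes used on the block `(m * 2 ^ j, m * 2 ^ (j + 1)]`. Its order
`2 ^ (j / 4)` keeps the error of the sieve below the main term; it is one less than a power of two
because the sieve bound involves the logarithm of the level plus one. -/
def dyadicLevel (j : ℕ) : ℕ := 2 ^ (j / 4 + 1) - 1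

lemma dyadicLevel_add_one (j : ℕ) : dyadicLevel j + 1 = 2 ^ (j / 4 + 1) :=
  Nat.sub_add_cancel Nat.one_le_two_pow

lemma one_le_dyadicLevel (j : ℕ) : 1 ≤ dyadicLevel j :=
  Nat.le_sub_of_add_le (Nat.pow_le_pow_right two_pos (Nat.le_add_left 1 (j / 4)))

lemma dyadicLevel_le_two_pow (j : ℕ) : dyadicLevel j ≤ 2 ^ j := by
  rw [dyadicLevel, Nat.sub_le_iff_le_add]
  rcases j.eq_zero_or_pos with rfl | hj
  · norm_num
  · exact (Nat.pow_le_pow_right two_pos (by omega)).trans (Nat.le_succ _)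

lemma div_six_le_log_dyadicLevel_add_one (j : ℕ) :
    (j + 1 : ℝ) / 6 ≤ Real.log (dyadicLevel j + 1) := by
  have hj : (j + 1 : ℝ) ≤ 4 * ((j / 4 : ℕ) + 1) := by exact_mod_cast (by omega)
  have hcast : (dyadicLevel j + 1 : ℝ) = 2 ^ (j / 4 + 1) := by
    exact_mod_cast dyadicLevel_add_one j
  rw [hcast, Real.log_pow]
  push_cast
  nlinarith [Real.log_two_gt_d9]

lemma dyadicLevel_sq_mul_le (j : ℕ) : dyadicLevel j ^ 2 * (j + 1) ≤ 8 * 2 ^ j := by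
  have hsplit : 2 * (j / 4) + (j - 2 * (j / 4)) = j := by omega
  calc dyadicLevel j ^ 2 * (j + 1)
      ≤ (2 ^ (j / 4 + 1)) ^ 2 * (2 * 2 ^ (j - 2 * (j / 4))) := by
        gcongr
        · exact Nat.sub_le _ 1
        · have := Nat.lt_two_pow_self (n := j - 2 * (j / 4))
          omega
    _ = 8 * 2 ^ (2 * (j / 4) + (j - 2 * (j / 4))) := by ring
    _ = 8 * 2 ^ j := by rw [hsplit]

lemma card_primes_modEq_dyadic_le {m : ℕ} (hm : m ≠ 0) (c j : ℕ) :
    (#{p ∈ Ioc (m * 2 ^ j) (m * 2 ^ (j + 1)) | p.Prime ∧ p ≡ c [MOD m]} : ℝ) ≤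
      20 / m.totient * (j + 1 : ℝ)⁻¹ * (m * 2 ^ j) := by
  have : (0 : ℝ) < m.totient := by
    exact_mod_cast Nat.totient_pos.2 (Nat.pos_of_ne_zero hm)
  have hmain : 2 * (m * 2 ^ j : ℕ) / (m.totient * Real.log (dyadicLevel j + 1)) ≤
      12 / m.totient * (j + 1 : ℝ)⁻¹ * (m * 2 ^ j) := by
    calc 2 * (m * 2 ^ j : ℕ) / (m.totient * Real.log (dyadicLevel j + 1))
        ≤ 2 * (m * 2 ^ j : ℕ) / (m.totient * ((j + 1 : ℝ) / 6)) := by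
          gcongr
          exact div_six_le_log_dyadicLevel_add_one j
      _ = 12 / m.totient * (j + 1 : ℝ)⁻¹ * (m * 2 ^ j) := by push_cast; field_simp; norm_num
  have herror : (dyadicLevel j : ℝ) ^ 2 ≤ 8 / m.totient * (j + 1 : ℝ)⁻¹ * (m * 2 ^ j) := by
    calc (dyadicLevel j : ℝ) ^ 2 ≤ 8 * 2 ^ j / (j + 1) := by
          rw [le_div_iff₀ (by positivity)]
          exact_mod_cast dyadicLevel_sq_mul_le j
      _ = 8 / m.totient * (j + 1 : ℝ)⁻¹ * (m.totient * 2 ^ j) := by field_simp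
      _ ≤ 8 / m.totient * (j + 1 : ℝ)⁻¹ * (m * 2 ^ j) := by
          gcongr
          exact m.totient_le
  have hlevel : dyadicLevel j ≤ m * 2 ^ j :=
    (dyadicLevel_le_two_pow j).trans (Nat.le_mul_of_pos_left _ (Nat.pos_of_ne_zero hm))
  have hsieve := brun_titchmarsh hm c (m * 2 ^ j) (one_le_dyadicLevel j) hlevel
  rw [← mul_two, mul_assoc, ← pow_succ] at hsieve
  calc (#{p ∈ Ioc (m * 2 ^ j) (m * 2 ^ (j + 1)) | p.Prime ∧ p ≡ c [MOD m]} : ℝ)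
      ≤ 12 / m.totient * (j + 1 : ℝ)⁻¹ * (m * 2 ^ j) +
          8 / m.totient * (j + 1 : ℝ)⁻¹ * (m * 2 ^ j) := hsieve.trans (add_le_add hmain herror)
    _ = 20 / m.totient * (j + 1 : ℝ)⁻¹ * (m * 2 ^ j) := by ring

lemma sum_inv_primes_modEq_dyadic_le {m : ℕ} (hm : m ≠ 0) (c j : ℕ) :
    ∑ p ∈ Ioc (m * 2 ^ j) (m * 2 ^ (j + 1)) with p.Prime ∧ p ≡ c [MOD m], (p : ℝ)⁻¹ ≤
      20 / m.totient * (j + 1 : ℝ)⁻¹ := by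
  have hpos : (0 : ℝ) < m * 2 ^ j := by
    have : (0 : ℝ) < m := by exact_mod_cast Nat.pos_of_ne_zero hm
    positivity
  calc ∑ p ∈ Ioc (m * 2 ^ j) (m * 2 ^ (j + 1)) with p.Prime ∧ p ≡ c [MOD m], (p : ℝ)⁻¹
      ≤ #{p ∈ Ioc (m * 2 ^ j) (m * 2 ^ (j + 1)) | p.Prime ∧ p ≡ c [MOD m]} •
          (m * 2 ^ j : ℝ)⁻¹ := by
        refine sum_le_card_nsmul _ _ _ fun p hp => inv_anti₀ hpos ?_
        exact_mod_cast (mem_Ioc.1 (mem_filter.1 hp).1).1.le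
    _ ≤ 20 / m.totient * (j + 1 : ℝ)⁻¹ := by
        rw [nsmul_eq_mul, mul_inv_le_iff₀ hpos]
        exact card_primes_modEq_dyadic_le hm c j

lemma mem_Ioc_mul_two_pow_log {m p : ℕ} (hm : m ≠ 0) (hmp : m < p) :
    p ∈ Ioc (m * 2 ^ Nat.log 2 ((p - 1) / m)) (m * 2 ^ (Nat.log 2 ((p - 1) / m) + 1)) := by
  have hmpos := Nat.pos_of_ne_zero hm
  have hdiv : (p - 1) / m ≠ 0 := (Nat.div_pos (by omega) hmpos).ne'
  have hlower := (Nat.le_div_iff_mul_le hmpos).1 (Nat.pow_log_le_self 2 hdiv)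
  have hupper := (Nat.div_lt_iff_lt_mul hmpos).1 (Nat.lt_pow_succ_log_self one_lt_two ((p - 1) / m))
  rw [mul_comm, Nat.succ_eq_add_one] at hupper
  rw [mul_comm] at hlower
  exact mem_Ioc.2 ⟨by omega, by omega⟩

lemma sum_inv_primes_modEq_le_log_log {m : ℕ} (hm : m ≠ 0) (c X : ℕ) :
    ∑ p ∈ Ioc m X with p.Prime ∧ p ≡ c [MOD m], (p : ℝ)⁻¹ ≤
      20 / m.totient * (1 + Real.log (Nat.log 2 X + 1)) := by
  set P := {p ∈ Ioc m X | p.Prime ∧ p ≡ c [MOD m]}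
  have hmaps : ∀ p ∈ P, Nat.log 2 ((p - 1) / m) ∈ range (Nat.log 2 X + 1) := by
    intro p hp
    have hpX := (mem_Ioc.1 (mem_filter.1 hp).1).2
    exact mem_range_succ_iff.2 (Nat.log_mono_right
      ((Nat.div_le_self _ _).trans ((Nat.sub_le p 1).trans hpX)))
  have hfiber (j : ℕ) : {p ∈ P | Nat.log 2 ((p - 1) / m) = j} ⊆
      {p ∈ Ioc (m * 2 ^ j) (m * 2 ^ (j + 1)) | p.Prime ∧ p ≡ c [MOD m]} := by
    intro p hp
    obtain ⟨hpP, rfl⟩ := mem_filter.1 hp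
    obtain ⟨hpIoc, hprime⟩ := mem_filter.1 hpP
    exact mem_filter.2 ⟨mem_Ioc_mul_two_pow_log hm (mem_Ioc.1 hpIoc).1, hprime⟩
  have hharmonic : ∑ j ∈ range (Nat.log 2 X + 1), (j + 1 : ℝ)⁻¹ ≤
      1 + Real.log (Nat.log 2 X + 1) := by
    simpa [harmonic] using harmonic_le_one_add_log (Nat.log 2 X + 1)
  calc ∑ p ∈ P, (p : ℝ)⁻¹
      = ∑ j ∈ range (Nat.log 2 X + 1), ∑ p ∈ P with Nat.log 2 ((p - 1) / m) = j, (p : ℝ)⁻¹ :=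
        (sum_fiberwise_of_maps_to hmaps _).symm
    _ ≤ ∑ j ∈ range (Nat.log 2 X + 1), 20 / m.totient * (j + 1 : ℝ)⁻¹ := by
        refine sum_le_sum fun j _ => le_trans ?_ (sum_inv_primes_modEq_dyadic_le hm c j)
        exact sum_le_sum_of_subset_of_nonneg (hfiber j) fun p _ _ => by positivity
    _ ≤ 20 / m.totient * (1 + Real.log (Nat.log 2 X + 1)) := by
        rw [← mul_sum]
        gcongr

lemma one_le_log_log {x : ℝ} (hx : Real.exp (Real.exp 1) ≤ x) : 1 ≤ Real.log (Real.log x) := by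
  have hlog := (Real.le_log_iff_exp_le ((Real.exp_pos _).trans_le hx)).2 hx
  exact (Real.le_log_iff_exp_le ((Real.exp_pos 1).trans_le hlog)).2 hlog

lemma log_natLog_floor_add_one_le {x : ℝ} (hx : Real.exp (Real.exp 1) ≤ x) :
    Real.log (Nat.log 2 ⌊x⌋₊ + 1) ≤ 2 * Real.log (Real.log x) := by
  have hx0 : 0 < x := (Real.exp_pos _).trans_le hx
  have he : 2 < Real.exp 1 := by linarith [Real.exp_one_gt_d9]
  have hlog : Real.exp 1 ≤ Real.log x := (Real.le_log_iff_exp_le hx0).2 hx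
  have hfloor : ⌊x⌋₊ ≠ 0 := by
    refine (Nat.floor_pos.2 (le_trans ?_ hx)).ne'
    exact Real.one_le_exp (Real.exp_pos 1).le
  have hpow : (2 : ℝ) ^ Nat.log 2 ⌊x⌋₊ ≤ x := by
    refine le_trans ?_ (Nat.floor_le hx0.le)
    exact_mod_cast Nat.pow_log_le_self 2 hfloor
  have hNatLog : Nat.log 2 ⌊x⌋₊ * Real.log 2 ≤ Real.log x := by
    rw [← Real.log_pow]
    exact Real.log_le_log (by positivity) hpow
  have hdouble : Nat.log 2 ⌊x⌋₊ + 1 ≤ 2 * Real.log x := by nlinarith [Real.log_two_gt_d9]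
  calc Real.log (Nat.log 2 ⌊x⌋₊ + 1)
      ≤ Real.log (Real.log x ^ 2) := Real.log_le_log (by positivity) (by nlinarith)
    _ = 2 * Real.log (Real.log x) := by rw [Real.log_pow, Nat.cast_two]

theorem sum_inv_primes_modEq_le {m : ℕ} (hm : m ≠ 0) (c : ℕ) {x : ℝ}
    (hx : Real.exp (Real.exp 1) ≤ x) :
    ∑ p ∈ Ioc m ⌊x⌋₊ with p.Prime ∧ p ≡ c [MOD m], (p : ℝ)⁻¹ ≤
      60 * Real.log (Real.log x) / m.totient := by
  calc ∑ p ∈ Ioc m ⌊x⌋₊ with p.Prime ∧ p ≡ c [MOD m], (p : ℝ)⁻¹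
      ≤ 20 / m.totient * (1 + Real.log (Nat.log 2 ⌊x⌋₊ + 1)) :=
        sum_inv_primes_modEq_le_log_log hm c ⌊x⌋₊
    _ ≤ 20 / m.totient * (3 * Real.log (Real.log x)) := by
        gcongr
        linarith [one_le_log_log hx, log_natLog_floor_add_one_le hx]
    _ = 60 * Real.log (Real.log x) / m.totient := by ring

end PrimeReciprocals

section Carmichael

lemma exists_pow_dvd_of_pow_dvd_lcm {ι : Type*} {s : Finset ι} {f : ι → ℕ} {q a : ℕ}
    (hq : q.Prime) (ha : a ≠ 0) (h : q ^ a ∣ s.lcm f) : ∃ i ∈ s, q ^ a ∣ f i := by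
  by_cases hzero : ∃ i ∈ s, f i = 0
  · obtain ⟨i, hi, hfi⟩ := hzero
    exact ⟨i, hi, hfi ▸ dvd_zero _⟩
  · push Not at hzero
    rw [hq.pow_dvd_iff_le_factorization (lcm_ne_zero_iff.2 hzero), factorization_lcm hzero,
      Finset.le_sup_iff (bot_lt_iff_ne_bot.2 ha)] at h
    obtain ⟨i, hi, hai⟩ := h
    exact ⟨i, hi, (hq.pow_dvd_iff_le_factorization (hzero i hi)).2 hai⟩

lemma pow_succ_dvd_or_modEq_one_of_pow_dvd_totient {p q a k : ℕ} (hp : p.Prime) (hq : q.Prime)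
    (h : q ^ a ∣ (p ^ k).totient) : q ^ (a + 1) ∣ p ^ k ∨ p ≡ 1 [MOD q ^ a] := by
  rcases k with _ | k
  · right
    rw [pow_zero, Nat.totient_one, Nat.dvd_one] at h
    rw [h]
    exact Nat.modEq_one
  rw [Nat.totient_prime_pow_succ hp] at h
  rcases eq_or_ne p q with rfl | hpq
  · left
    have hcoprime : (p ^ a).Coprime (p - 1) :=
      (((Nat.coprime_self_sub_right hp.one_le).2 (Nat.coprime_one_right p)).pow_left a)
    rw [pow_succ, pow_succ]
    exact mul_dvd_mul_right (hcoprime.dvd_of_dvd_mul_right h) p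
  · right
    have hcoprime : (q ^ a).Coprime (p ^ k) :=
      Nat.Coprime.pow a k ((Nat.coprime_primes hq hp).2 hpq.symm)
    exact ((Nat.modEq_iff_dvd' hp.one_le).2 (hcoprime.dvd_of_dvd_mul_left h)).symm

lemma pow_succ_dvd_or_exists_prime_of_pow_dvd_carmichael {q a n : ℕ} (hq : q.Prime) (ha : a ≠ 0)
    (hn : n ≠ 0) (h : q ^ a ∣ carmichael n) :
    q ^ (a + 1) ∣ n ∨ ∃ p, p.Prime ∧ p ≡ 1 [MOD q ^ a] ∧ p ∣ n := by
  have : NeZero n := ⟨hn⟩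
  rw [carmichael, ← ArithmeticFunction.carmichael_eq_exponent hn,
    ArithmeticFunction.carmichael_factorization] at h
  obtain ⟨p, hp, hdvd⟩ := exists_pow_dvd_of_pow_dvd_lcm hq ha h
  have hprime := Nat.prime_of_mem_primeFactors hp
  refine (pow_succ_dvd_or_modEq_one_of_pow_dvd_totient hprime hq
    (hdvd.trans (ArithmeticFunction.carmichael_dvd_totient _))).imp ?_ ?_
  · exact fun hpow => hpow.trans (Nat.ordProj_dvd n p)
  · exact fun hmod => ⟨p, hprime, hmod, Nat.dvd_of_mem_primeFactors hp⟩

lemma card_Icc_filter_dvd_le {x : ℝ} (hx : 0 ≤ x) (d : ℕ) :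
    (#{n ∈ Icc 1 ⌊x⌋₊ | d ∣ n} : ℝ) ≤ x / d := by
  have hIcc : Icc 1 ⌊x⌋₊ = Ioc 0 ⌊x⌋₊ := rfl
  rw [hIcc, Nat.Ioc_filter_dvd_card_eq_div]
  grw [Nat.cast_div_le, Nat.floor_le hx]

lemma filter_pow_dvd_carmichael_subset {q a : ℕ} (hq : q.Prime) (ha : a ≠ 0) (X : ℕ) :
    {n ∈ Icc 1 X | q ^ a ∣ carmichael n} ⊆ {n ∈ Icc 1 X | q ^ (a + 1) ∣ n} ∪
      {p ∈ Ioc (q ^ a) X | p.Prime ∧ p ≡ 1 [MOD q ^ a]}.biUnion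
        fun p => {n ∈ Icc 1 X | p ∣ n} := by
  intro n hn
  simp only [mem_filter, mem_union, mem_biUnion, mem_Ioc] at hn ⊢
  obtain ⟨hnX, hdvd⟩ := hn
  have hn0 : 0 < n := (mem_Icc.1 hnX).1
  refine (pow_succ_dvd_or_exists_prime_of_pow_dvd_carmichael hq ha hn0.ne' hdvd).imp
    (fun hpow => ⟨hnX, hpow⟩) ?_
  rintro ⟨p, hp, hmod, hpn⟩
  have hlt : q ^ a < p := by
    have hle := Nat.le_of_dvd (Nat.sub_pos_of_lt hp.one_lt)
      ((Nat.modEq_iff_dvd' hp.one_le).1 hmod.symm)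
    have := hp.one_lt
    omega
  exact ⟨p, ⟨⟨hlt, (Nat.le_of_dvd hn0 hpn).trans (mem_Icc.1 hnX).2⟩, hp, hmod⟩, hnX, hpn⟩

lemma card_pow_dvd_carmichael_le {q a : ℕ} (hq : q.Prime) (ha : a ≠ 0) {x : ℝ} (hx : 0 ≤ x) :
    (#{n ∈ Icc 1 ⌊x⌋₊ | q ^ a ∣ carmichael n} : ℝ) ≤ x / (q : ℝ) ^ (a + 1) +
      x * ∑ p ∈ Ioc (q ^ a) ⌊x⌋₊ with p.Prime ∧ p ≡ 1 [MOD q ^ a], (p : ℝ)⁻¹ := by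
  set P := {p ∈ Ioc (q ^ a) ⌊x⌋₊ | p.Prime ∧ p ≡ 1 [MOD q ^ a]}
  calc (#{n ∈ Icc 1 ⌊x⌋₊ | q ^ a ∣ carmichael n} : ℝ)
      ≤ #{n ∈ Icc 1 ⌊x⌋₊ | q ^ (a + 1) ∣ n} + ∑ p ∈ P, (#{n ∈ Icc 1 ⌊x⌋₊ | p ∣ n} : ℝ) := by
        exact_mod_cast (card_le_card (filter_pow_dvd_carmichael_subset hq ha ⌊x⌋₊)).trans
          ((card_union_le _ _).trans (Nat.add_le_add_left card_biUnion_le _))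
    _ ≤ x / (q ^ (a + 1) : ℕ) + ∑ p ∈ P, x / p :=
        add_le_add (card_Icc_filter_dvd_le hx _) (sum_le_sum fun p _ => card_Icc_filter_dvd_le hx p)
    _ = x / (q : ℝ) ^ (a + 1) + x * ∑ p ∈ P, (p : ℝ)⁻¹ := by
        simp only [Nat.cast_pow, mul_sum, div_eq_mul_inv]

lemma pow_le_two_mul_totient_pow {q : ℕ} (hq : q.Prime) (a : ℕ) :
    q ^ a ≤ 2 * (q ^ a).totient := by
  rcases a with _ | a
  · simp
  · have hq2 : q ≤ 2 * (q - 1) := by have := hq.two_le; omega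
    rw [Nat.totient_prime_pow_succ hq, pow_succ]
    linarith [Nat.mul_le_mul_left (q ^ a) hq2]

end Carmichael

theorem count_carmichael_divisible :
    ∃ C : ℝ, 0 < C ∧ ∀ q : ℕ, q.Prime → ∀ a : ℕ, 1 ≤ a →
      ∀ x : ℝ, Real.exp (Real.exp 1) ≤ x →
      (((Finset.Icc 1 ⌊x⌋₊).filter (fun n : ℕ => q ^ a ∣ carmichael n)).card : ℝ) ≤
        C * x * Real.log (Real.log x) / (q : ℝ) ^ a := by
  refine ⟨121, by norm_num, fun q hq a ha x hx => ?_⟩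
  have hx0 : 0 < x := (Real.exp_pos _).trans_le hx
  have hq0 : (0 : ℝ) < (q : ℝ) ^ a := pow_pos (by exact_mod_cast hq.pos) a
  have hloglog : 1 ≤ Real.log (Real.log x) := one_le_log_log hx
  have hφ : (q : ℝ) ^ a / 2 ≤ (q ^ a).totient := by
    rw [div_le_iff₀' two_pos]
    exact_mod_cast pow_le_two_mul_totient_pow hq a
  calc _ ≤ x / (q : ℝ) ^ (a + 1) +
          x * ∑ p ∈ Ioc (q ^ a) ⌊x⌋₊ with p.Prime ∧ p ≡ 1 [MOD q ^ a], (p : ℝ)⁻¹ :=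
        card_pow_dvd_carmichael_le hq (Nat.one_le_iff_ne_zero.1 ha) hx0.le
    _ ≤ x * Real.log (Real.log x) / (q : ℝ) ^ a +
          x * (60 * Real.log (Real.log x) / ((q : ℝ) ^ a / 2)) := by
        gcongr
        · exact le_mul_of_one_le_right hx0.le hloglog
        · exact_mod_cast hq.one_le
        · omega
        · exact (sum_inv_primes_modEq_le (pow_ne_zero a hq.ne_zero) 1 hx).trans (by gcongr)
    _ = 121 * x * Real.log (Real.log x) / (q : ℝ) ^ a := by ring
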